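/- Let γ be an n-mode covariance matrix (2n×2n real symmetric with γ + iΩ positive semidefinite), with the n modes labelled A₁, …, A_n, each comprising a single mode. Then the Gaussian Rényi-2 entanglement is monogamous: E₂(γ_{A₁ : A₂…A_n}) − Σ_{j=2}^n E₂(γ_{A₁ : A_j}) ≥ 0, where E₂(γ_{A₁ : A₂…A_n}) is computed on γ with respect to the bipartition of mode A₁ versus the rest, and E₂(γ_{A₁ : A_j}) is computed on the reduced two-mode CM γ_{A₁A_j} (the 4×4 principal submatrix on modes A₁ and A_j). -/

import Mathlib

/-!
# Monogamy of the Gaussian Rényi-2 entanglement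

Let `Ω` be the symplectic form. If `M > 0` and both `M` and `N = Ω M⁻¹ Ωᵀ` lie below `γ`, then the
geometric mean `σ` of `M` and `N` is a pure covariance matrix (`exists_geometric_mean`,
`exists_pure_le`), it lies below `(M + N) / 2 ≤ γ`, and `(det σ_A)² ≤ det M_A · det (M⁻¹)_A` because
`[[M, σ], [σ, N]] ⪰ 0`. Hence `E₂(γ_{A:B}) ≤ (1/4) ln (det M_A · det (M⁻¹)_A)` (`E2_le_of_le`).

Let `σ ≤ γ` satisfy the uncertainty relation, and write `d(T)` for the determinant of the reduction
of `σ` to the modes in `T`. For a mode `j ≠ 0` and a set `S` of further modes, take for `M` the Schur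
complement over `S` of the reduction of `σ` to `{0, j} ∪ S`. It lies below `σ_{0j}`, and so does
`Ω M⁻¹ Ωᵀ`, since `Ω V⁻¹ Ωᵀ ≤ V` for every covariance matrix `V` and `M⁻¹` is a principal submatrix
of such a `V⁻¹`. Jacobi's complementary minor identity evaluates the bound to a conditional mutual
information (`E2_le_conditional`):
`E₂(γ_{0:j}) ≤ (1/4) ln (d({0} ∪ S) d({j} ∪ S) / (d(S) d({0, j} ∪ S)))`.

Adding the modes one at a time, these bounds telescope (`sum_E2_le`). With `B` the set of all modes
other than `0`, and `σ` pure, the sum of the `E₂(γ_{0:j})` is at most `(1/4) ln (d({0}) d(B))`. Finally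
`d(B) = det (σ⁻¹)_0 ≤ d({0})`, again by Jacobi's identity and `Ω σ⁻¹ Ωᵀ ≤ σ`, so the sum is at most
`(1/2) ln d({0})` for every pure `σ ≤ γ`, and therefore at most the infimum. The infimum is over a
nonempty set, by the case `M = γ` of the construction above.
-/

open Matrix
open scoped ComplexOrder

/-- The standard symplectic form `Ω = ⊕ₖ [[0,1],[−1,0]]` on a phase space with
modes indexed by `ι`; each mode carries a pair of canonical quadratures,
indexed by `Fin 2`. -/
def symplecticForm (ι : Type*) [DecidableEq ι] :
    Matrix (ι × Fin 2) (ι × Fin 2) ℝ :=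
  fun p q =>
    if p.1 = q.1 ∧ p.2 = 0 ∧ q.2 = 1 then 1
    else if p.1 = q.1 ∧ p.2 = 1 ∧ q.2 = 0 then -1
    else 0

/-- The bona fide (uncertainty) condition on a covariance matrix `γ`:
`γ + iΩ` is positive semidefinite as a complex Hermitian matrix. -/
def Uncertainty {ι : Type*} [Fintype ι] [DecidableEq ι]
    (γ : Matrix (ι × Fin 2) (ι × Fin 2) ℝ) : Prop :=
  (γ.map Complex.ofReal + Complex.I • (symplecticForm ι).map Complex.ofReal).PosSemidef

/-- The reduced covariance matrix on the subset `S` of the modes (the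
principal submatrix on the two phase-space rows/columns of each mode
in `S`). -/
def reduceCM {ι : Type*} [Fintype ι] (S : Finset ι)
    (γ : Matrix (ι × Fin 2) (ι × Fin 2) ℝ) :
    Matrix (↥S × Fin 2) (↥S × Fin 2) ℝ :=
  γ.submatrix (fun p => ((p.1 : ι), p.2)) (fun p => ((p.1 : ι), p.2))

/-- The Gaussian Rényi-2 entanglement `E₂(γ_{S : Sᶜ})` for the bipartition of
the modes into `S` and its complement: the infimum of `(1/2) ln det σ_S` over
pure covariance matrices `σ` (real symmetric, `σ + iΩ ⪰ 0`, `det σ = 1`)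
with `σ ≤ γ` in the Loewner order. -/
noncomputable def E2 {ι : Type*} [Fintype ι] [DecidableEq ι] (S : Finset ι)
    (γ : Matrix (ι × Fin 2) (ι × Fin 2) ℝ) : ℝ :=
  sInf {x | ∃ σ : Matrix (ι × Fin 2) (ι × Fin 2) ℝ,
    σ.IsSymm ∧ Uncertainty σ ∧ σ.det = 1 ∧ (γ - σ).PosSemidef ∧
    x = (1/2) * Real.log (reduceCM S σ).det}

namespace Renyi2

/-! ### Determinants, Loewner order and the geometric mean -/

section LinearAlgebra

open scoped MatrixOrder

variable {m k : Type*} [Fintype m] [DecidableEq m] [Fintype k] [DecidableEq k]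

lemma one_le_det_one_add {P : Matrix m m ℝ} (hP : P.PosSemidef) : 1 ≤ (1 + P).det := by
  have h : (1 + P).IsHermitian := (Matrix.PosSemidef.one.add hP).isHermitian
  rw [h.det_eq_prod_eigenvalues]
  have key : ∀ i, 1 ≤ h.eigenvalues i := by
    intro i
    have h1 := h.eigenvalues_mem_spectrum_real i
    have h2 : h.eigenvalues i - 1 ∈ spectrum ℝ P := by
      rw [← spectrum.add_mem_add_iff (s := (1:ℝ))]
      simpa using h1
    rw [hP.isHermitian.spectrum_real_eq_range_eigenvalues] at h2
    obtain ⟨j, hj⟩ := h2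
    have := hP.eigenvalues_nonneg j
    linarith
  simpa using Finset.prod_le_prod (s := Finset.univ) (fun _ _ => zero_le_one) (fun i _ => key i)

/-- The determinant is monotone for the Loewner order. -/
lemma det_le_det_of_le {A B : Matrix m m ℝ} (hB : B.PosDef) (h : (A - B).PosSemidef) :
    B.det ≤ A.det := by
  obtain ⟨X, hX⟩ := CStarAlgebra.nonneg_iff_eq_star_mul_self.mp h.nonneg
  have hu : IsUnit B := hB.isUnit
  have hu' : IsUnit B.det := (Matrix.isUnit_iff_isUnit_det B).mp hu
  have e : A = B * (1 + B⁻¹ * Xᴴ * X) := by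
    rw [mul_add, mul_one, ← mul_assoc, ← mul_assoc, Matrix.mul_nonsing_inv _ hu', one_mul]
    change A = B + star X * X
    rw [← hX, add_sub_cancel]
  rw [e, Matrix.det_mul, Matrix.det_one_add_mul_comm, ← mul_assoc]
  have := one_le_det_one_add (hB.inv.posSemidef.mul_mul_conjTranspose_same X)
  nlinarith [hB.det_pos]

/-- Jacobi's complementary minor identity, for the principal minors indexed by the two parts `f`
and `g` of a partition of the index set. -/
lemma det_inv_submatrix {a b : Type*} [Fintype a] [DecidableEq a] [Fintype b] [DecidableEq b]
    (V : Matrix m m ℝ) (hV : V.det ≠ 0) (f : a → m) (g : b → m)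
    (hfg : Function.Bijective (Sum.elim f g)) :
    (V⁻¹.submatrix f f).det = (V.submatrix g g).det / V.det := by
  let e := Equiv.ofBijective _ hfg
  have hu : IsUnit V.det := isUnit_iff_ne_zero.mpr hV
  have hVW : V * V⁻¹ = 1 := Matrix.mul_nonsing_inv _ hu
  have hb : ∀ M : Matrix m m ℝ, M.submatrix e e = Matrix.fromBlocks (M.submatrix f f)
      (M.submatrix f g) (M.submatrix g f) (M.submatrix g g) := by
    intro M
    ext (i | i) (j | j) <;> rfl
  have h1 : V.submatrix e e * V⁻¹.submatrix e e = 1 := by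
    rw [Matrix.submatrix_mul_equiv, hVW, Matrix.submatrix_one_equiv]
  have h1' := h1
  rw [hb, hb, Matrix.fromBlocks_multiply, ← Matrix.fromBlocks_one, Matrix.fromBlocks_inj] at h1'
  obtain ⟨h11, h12, h21, h22⟩ := h1'
  -- Multiplying `V` by `V⁻¹` with its second block column replaced by that of `1` gives a block
  -- triangular matrix.
  have h2 : V.submatrix e e * Matrix.fromBlocks (V⁻¹.submatrix f f) 0 (V⁻¹.submatrix g f) 1
      = Matrix.fromBlocks 1 (V.submatrix f g) 0 (V.submatrix g g) := by
    rw [hb, Matrix.fromBlocks_multiply, h11, h21]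
    simp
  have h3 := congrArg Matrix.det h2
  rw [Matrix.det_mul, Matrix.det_submatrix_equiv_self, Matrix.det_fromBlocks_zero₁₂,
    Matrix.det_fromBlocks_zero₂₁] at h3
  rw [eq_div_iff hV]
  simp only [Matrix.det_one, mul_one, one_mul] at h3
  linarith

lemma bijective_prodMap {a b c : Type*} {f : a → c} {g : b → c}
    (h : Function.Bijective (Sum.elim f g)) :
    Function.Bijective (Sum.elim (Prod.map f (id : Fin 2 → Fin 2)) (Prod.map g id)) := by
  have : (Sum.elim (Prod.map f (id : Fin 2 → Fin 2)) (Prod.map g id)) =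
    Prod.map (Sum.elim f g) id ∘ (Equiv.sumProdDistrib a b (Fin 2)).symm := by
    ext (x | x) <;> rfl
  rw [this]
  exact (h.prodMap Function.bijective_id).comp (Equiv.bijective _)

lemma bijective_assoc {a b c : Type*} (s : Type*) {f : a → c} {g : b → c}
    (h : Function.Bijective (Sum.elim f g)) :
    Function.Bijective (Sum.elim (Sum.inl ∘ f) (Sum.map g (id : s → s))) := by
  have : Sum.elim (Sum.inl ∘ f) (Sum.map g (id : s → s)) =
      Sum.map (Sum.elim f g) id ∘ (Equiv.sumAssoc a b s).symm := by
    ext (x | x | x) <;> rfl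
  rw [this]
  exact (h.sumMap Function.bijective_id).comp (Equiv.bijective _)

/-- The Schur complement form of positivity of a block matrix with invertible first block. -/
lemma schur₁₁ {A B D : Matrix m m ℝ} (hA : A.PosDef) :
    (Matrix.fromBlocks A B Bᵀ D).PosSemidef ↔ (D - Bᵀ * A⁻¹ * B).PosSemidef := by
  have := hA.isUnit.invertible
  simpa using Matrix.PosDef.fromBlocks₁₁ B D hA

lemma schur₂₂ {A B D : Matrix m m ℝ} (hD : D.PosDef) :
    (Matrix.fromBlocks A B Bᵀ D).PosSemidef ↔ (A - B * D⁻¹ * Bᵀ).PosSemidef := by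
  have := hD.isUnit.invertible
  simpa using Matrix.PosDef.fromBlocks₂₂ A B hD

omit [Fintype m] [DecidableEq m] [Fintype k] [DecidableEq k] in
lemma blocks_submatrix {A B C D : Matrix m m ℝ}
    (h : (Matrix.fromBlocks A B C D).PosSemidef) (f : k → m) :
    (Matrix.fromBlocks (A.submatrix f f) (B.submatrix f f) (C.submatrix f f)
      (D.submatrix f f)).PosSemidef := by
  have := h.submatrix (Sum.map f f)
  convert this using 1
  ext (i | i) (j | j) <;> rfl

/-- If `[[M, G], [G, N]] ⪰ 0` then `G ≤ (M + N) / 2`: the arithmetic–geometric mean inequality. -/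
lemma le_of_blocks {M G N γ : Matrix m m ℝ} 
    (h : (Matrix.fromBlocks M G G N).PosSemidef)
    (hM : (γ - M).PosSemidef) (hN : (γ - N).PosSemidef) : (γ - G).PosSemidef := by
  have h1 := h.conjTranspose_mul_mul_same (Matrix.fromRows (1 : Matrix m m ℝ) (-1))
  have h2 := ((h1.add hM).add hN).smul (show (0:ℝ) ≤ 1/2 by norm_num)
  convert h2 using 1
  rw [Matrix.conjTranspose_fromRows_eq_fromCols_conjTranspose, Matrix.fromCols_mul_fromBlocks,
    Matrix.fromCols_mul_fromRows]
  simp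
  ext i j
  simp; ring

/-- The block condition bounds `G` by the geometric mean of `M` and `N`, at the level of
determinants. -/
lemma det_sq_le {M G N : Matrix m m ℝ} (hM : M.PosDef) (hG : G.PosDef)
    (h : (Matrix.fromBlocks M G G N).PosSemidef) : G.det ^ 2 ≤ M.det * N.det := by
  have hGt : Gᵀ = G := hG.isHermitian
  have h1 : (Matrix.fromBlocks M G Gᵀ N).PosSemidef := by rwa [hGt]
  rw [schur₁₁ hM] at h1
  have h2 : (Gᵀ * M⁻¹ * G).PosDef := by
    have := (Matrix.IsUnit.posDef_star_left_conjugate_iff hG.isUnit).mpr hM.inv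
    simpa [star_eq_conjTranspose] using this
  have h3 := det_le_det_of_le h2 h1
  rw [Matrix.det_mul, Matrix.det_mul, Matrix.det_transpose, Matrix.det_nonsing_inv,
    Ring.inverse_eq_inv'] at h3
  have := hM.det_pos
  calc G.det ^ 2 = M.det * (G.det * M.det⁻¹ * G.det) := by field_simp
    _ ≤ _ := by gcongr

/-- Inverting a principal submatrix of `V⁻¹` yields a Schur complement of `V`, which lies below the
corresponding principal submatrix of `V`. -/
lemma inv_submatrix_inv_le {V : Matrix m m ℝ} (hV : V.PosDef) {f : k → m}
    (hf : Function.Injective f) :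
    (V.submatrix f f - (V⁻¹.submatrix f f)⁻¹).PosSemidef := by
  have h1 : (Matrix.fromBlocks V 1 (1 : Matrix m m ℝ)ᵀ V⁻¹).PosSemidef := by
    rw [schur₂₂ hV.inv, Matrix.nonsing_inv_nonsing_inv _
      ((Matrix.isUnit_iff_isUnit_det V).mp hV.isUnit)]
    simpa using Matrix.PosSemidef.zero
  have h2 := blocks_submatrix h1 f
  rw [Matrix.transpose_one, Matrix.submatrix_one _ hf] at h2
  nth_rw 2 [← Matrix.transpose_one] at h2
  rw [schur₂₂ (hV.inv.submatrix hf)] at h2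
  simpa using h2

/-- For `M` positive definite and `J` orthogonal and skew-symmetric, `G` is the geometric mean of `M`
and `N = J M⁻¹ Jᵀ`. With `L = M^{1/2}` and `K = L⁻¹ J L⁻¹`, it equals `L (Kᵀ K)^{1/2} L`; the
relation `G J G = J` holds because `Kᵀ K = -K²`, hence also its square root, commutes with `K`. The
block condition follows from the Riccati equation `G M⁻¹ G = N`. -/
lemma exists_geometric_mean {M J : Matrix m m ℝ} (hM : M.PosDef) (hJ : Jᵀ = -J)
    (hJJ : J * Jᵀ = 1) :
    ∃ G : Matrix m m ℝ, G.PosDef ∧ G * J * G = J ∧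
      (Matrix.fromBlocks M G G (J * M⁻¹ * Jᵀ)).PosSemidef := by
  set L := CFC.sqrt M with hL
  have hLL : L * L = M := CFC.sqrt_mul_sqrt_self M hM.posSemidef.nonneg
  have hLps : L.PosSemidef := (CFC.sqrt_nonneg M).posSemidef
  have hLdet : L.det ≠ 0 := by
    intro h
    have := hM.det_pos
    rw [← hLL, Matrix.det_mul, h] at this
    simp at this
  have hLu : IsUnit L.det := isUnit_iff_ne_zero.mpr hLdet
  have hLt : Lᵀ = L := hLps.isHermitian
  have hLi : L * L⁻¹ = 1 := Matrix.mul_nonsing_inv _ hLu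
  have hiL : L⁻¹ * L = 1 := Matrix.nonsing_inv_mul _ hLu
  have hLit : L⁻¹ᵀ = L⁻¹ := by rw [Matrix.transpose_nonsing_inv, hLt]
  have hJJ2 : J * J = -1 := by rw [hJ] at hJJ; simpa [neg_eq_iff_eq_neg] using hJJ
  have hMi : M⁻¹ = L⁻¹ * L⁻¹ := by rw [← hLL, Matrix.mul_inv_rev]
  set K := L⁻¹ * J * L⁻¹ with hK
  have hKt : Kᵀ = -K := by
    simp [hK, Matrix.transpose_mul, hLit, hJ, mul_assoc]
  set Q := Kᵀ * K with hQ
  have hQps : Q.PosSemidef := by simpa using Matrix.posSemidef_conjTranspose_mul_self K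
  set S := CFC.sqrt Q with hS
  have hSS : S * S = Q := CFC.sqrt_mul_sqrt_self Q hQps.nonneg
  have hSps : S.PosSemidef := (CFC.sqrt_nonneg Q).posSemidef
  have hQK : Commute Q K := by
    rw [hQ, hKt]; exact ((Commute.refl K).neg_left).mul_left (Commute.refl K)
  have hSK : S * K = K * S := by
    rw [hS, CFC.sqrt_eq_cfc]; exact hQK.cfc_nnreal _
  -- `K` has the explicit inverse `-(L J L)`
  have hKinv : K * (L * J * L) = -1 := by
    calc K * (L * J * L) = L⁻¹ * J * (L⁻¹ * L) * J * L := by simp only [hK, mul_assoc]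
      _ = L⁻¹ * (J * J) * L := by rw [hiL]; simp only [mul_assoc, mul_one]
      _ = _ := by rw [hJJ2]; simp [hiL]
  have hSdet : S.det ≠ 0 := by
    intro h
    have h1 := congrArg Matrix.det hSS
    have h2 := congrArg Matrix.det hKinv
    rw [hQ, Matrix.det_mul, Matrix.det_mul, Matrix.det_transpose, h] at h1
    have h3 : K.det = 0 := by simpa using h1.symm
    rw [Matrix.det_mul, h3, zero_mul, Matrix.det_neg, Matrix.det_one, mul_one] at h2
    exact pow_ne_zero _ (by norm_num) h2.symm
  have hSpd : S.PosDef := hSps.posDef_iff_det_ne_zero.mpr hSdet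
  refine ⟨L * S * L, ?_, ?_, ?_⟩
  · have := (Matrix.IsUnit.posDef_star_left_conjugate_iff
      ((Matrix.isUnit_iff_isUnit_det L).mpr hLu)).mpr hSpd
    rwa [star_eq_conjTranspose, hLps.isHermitian] at this
  · have hYS : (L * J * L) * S = S * (L * J * L) := by
      have hYK : (L * J * L) * K = -1 := by
        have h1 : K * -(L * J * L) = 1 := by rw [mul_neg, hKinv, neg_neg]
        have h2 := mul_eq_one_comm.mp h1
        rw [neg_mul] at h2
        rw [← h2, neg_neg]
      calc (L * J * L) * S = -((L * J * L) * (S * (K * (L * J * L)))) := by rw [hKinv]; simp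
        _ = -((L * J * L) * ((K * S) * (L * J * L))) := by rw [← mul_assoc S, hSK]
        _ = -(((L * J * L) * K) * (S * (L * J * L))) := by simp only [mul_assoc]
        _ = _ := by rw [hYK]; simp
    calc L * S * L * J * (L * S * L) = L * (S * ((L * J * L) * S)) * L := by simp only [mul_assoc]
      _ = L * (Kᵀ * (K * (L * J * L))) * L := by
        rw [hYS, ← mul_assoc S, hSS, hQ, mul_assoc Kᵀ]
      _ = (L * L⁻¹) * J * (L⁻¹ * L) := by
        rw [hKinv, hKt, hK]; simp only [mul_neg, neg_neg, mul_one, mul_assoc]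
      _ = J := by rw [hLi, hiL]; simp
  · have hGt : (L * S * L)ᵀ = L * S * L := by
      simp [Matrix.transpose_mul, hLt, show Sᵀ = S from hSps.isHermitian, mul_assoc]
    have h : J * M⁻¹ * Jᵀ - (L * S * L)ᵀ * M⁻¹ * (L * S * L) = 0 := by
      rw [sub_eq_zero, eq_comm, hGt]
      calc L * S * L * M⁻¹ * (L * S * L)
          = L * S * (L * L⁻¹) * (L⁻¹ * L) * S * L := by rw [hMi]; simp only [mul_assoc]
        _ = L * (S * S) * L := by rw [hLi, hiL]; simp only [mul_assoc, one_mul]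
        _ = -((L * L⁻¹) * J * (L⁻¹ * L⁻¹) * J * (L⁻¹ * L)) := by
          rw [hSS, hQ, hKt, hK]; simp only [mul_neg, neg_mul, mul_assoc]
        _ = J * M⁻¹ * Jᵀ := by rw [hLi, hiL, hMi, hJ]; simp
    have h2 := (schur₁₁ (B := L * S * L) (D := J * M⁻¹ * Jᵀ) hM).mpr
      (by rw [h]; exact Matrix.PosSemidef.zero)
    rwa [hGt] at h2

end LinearAlgebra

/-! ### Covariance matrices and pure states below them -/

section Symplectic

variable {ι κ : Type*} [Fintype ι] [DecidableEq ι] [Fintype κ] [DecidableEq κ]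

local notation "J" => symplecticForm

omit [Fintype ι] in
lemma symp_transpose : (J ι)ᵀ = -J ι := by
  ext ⟨i, a⟩ ⟨j, b⟩
  fin_cases a <;> fin_cases b <;> simp [symplecticForm, eq_comm (a := i), apply_ite]

/-- Conjugation by the symplectic form permutes the two quadratures of each mode, up to sign. -/
lemma symp_conj_apply (X : Matrix (ι × Fin 2) (ι × Fin 2) ℝ) (p q : ι × Fin 2) :
    (J ι * X * (J ι)ᵀ) p q =
      (-1) ^ (p.2 : ℕ) * (-1) ^ (q.2 : ℕ) * X (p.1, 1 - p.2) (q.1, 1 - q.2) := by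
  have h1 : ∀ (p : ι × Fin 2) (v : ι × Fin 2 → ℝ),
      ∑ r, J ι p r * v r = (-1) ^ (p.2 : ℕ) * v (p.1, 1 - p.2) := by
    rintro ⟨i, a⟩ v
    rw [Fintype.sum_prod_type, Finset.sum_eq_single i]
    · fin_cases a <;> simp [symplecticForm]
    · intro j _ hj
      simp [symplecticForm, Ne.symm hj]
    · simp
  rw [mul_assoc, Matrix.mul_apply, h1, Matrix.mul_apply]
  simp_rw [Matrix.transpose_apply, mul_comm (X _ _)]
  rw [h1]; ring

lemma symp_mul_transpose : J ι * (J ι)ᵀ = 1 := by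
  have h : J ι * (J ι)ᵀ = J ι * 1 * (J ι)ᵀ := by rw [mul_one]
  rw [h]
  ext ⟨i, a⟩ ⟨j, b⟩
  rw [symp_conj_apply]
  fin_cases a <;> fin_cases b <;> simp [Matrix.one_apply]

omit [Fintype ι] [Fintype κ] in
lemma symp_submatrix {f : κ → ι} (hf : Function.Injective f) :
    (J ι).submatrix (Prod.map f id) (Prod.map f id) = J κ := by
  ext ⟨i, a⟩ ⟨j, b⟩
  simp [symplecticForm, hf.eq_iff]

lemma det_symp_ne_zero : (J ι).det ≠ 0 := by
  intro h
  have := congrArg Matrix.det (symp_mul_transpose (ι := ι))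
  rw [Matrix.det_mul, h] at this
  simp at this

lemma det_symp_conj (X : Matrix (ι × Fin 2) (ι × Fin 2) ℝ) :
    (J ι * X * (J ι)ᵀ).det = X.det := by
  have := congrArg Matrix.det (symp_mul_transpose (ι := ι))
  rw [Matrix.det_mul, Matrix.det_one] at this
  rw [Matrix.det_mul, Matrix.det_mul]
  linear_combination X.det * this

lemma symp_conj_submatrix (X : Matrix (ι × Fin 2) (ι × Fin 2) ℝ) (f : κ → ι) :
    (J ι * X * (J ι)ᵀ).submatrix (Prod.map f id) (Prod.map f id) =
      J κ * X.submatrix (Prod.map f id) (Prod.map f id) * (J κ)ᵀ := by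
  ext p q
  rw [Matrix.submatrix_apply, symp_conj_apply, symp_conj_apply]
  rfl

omit [Fintype ι] in
lemma isHermitian_add_symp {V : Matrix (ι × Fin 2) (ι × Fin 2) ℝ} (hV : V.IsSymm) :
    (V.map Complex.ofReal + Complex.I • (J ι).map Complex.ofReal).IsHermitian := by
  ext p q
  have h1 : V q p = V p q := hV.apply p q
  have h2 : J ι q p = - J ι p q := congrFun (congrFun (symp_transpose (ι := ι)) p) q
  simp [h1, h2]

lemma re_quadratic_form {V : Matrix (ι × Fin 2) (ι × Fin 2) ℝ} (z : ι × Fin 2 → ℂ) :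
    (star z ⬝ᵥ (V.map Complex.ofReal + Complex.I • (J ι).map Complex.ofReal) *ᵥ z).re =
      star (Sum.elim (fun p => (z p).re) (fun p => -(z p).im)) ⬝ᵥ
        Matrix.fromBlocks V (J ι) (J ι)ᵀ V *ᵥ
          Sum.elim (fun p => (z p).re) (fun p => -(z p).im) := by
  rw [symp_transpose]
  simp only [dotProduct, mulVec, Fintype.sum_sum_type, Finset.mul_sum, Complex.re_sum,
    ← Finset.sum_add_distrib, Sum.elim_inl, Sum.elim_inr, Pi.star_apply]
  refine Finset.sum_congr rfl fun p _ => Finset.sum_congr rfl fun q _ => ?_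
  simp
  ring

/-- The uncertainty relation in real form: `V + iΩ ⪰ 0` if and only if `[[V, Ω], [Ωᵀ, V]] ⪰ 0`. -/
lemma uncertainty_iff {V : Matrix (ι × Fin 2) (ι × Fin 2) ℝ} (hV : V.IsSymm) :
    Uncertainty V ↔ (Matrix.fromBlocks V (J ι) (J ι)ᵀ V).PosSemidef := by
  constructor
  · intro h
    refine .of_dotProduct_mulVec_nonneg ?_ fun w => ?_
    · rw [Matrix.IsHermitian, Matrix.fromBlocks_conjTranspose]
      simp [hV.eq]
    · have h1 := h.dotProduct_mulVec_nonneg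
        (fun p => (⟨w (Sum.inl p), -w (Sum.inr p)⟩ : ℂ))
      have h2 := (Complex.nonneg_iff.mp h1).1
      rw [re_quadratic_form] at h2
      have hw : Sum.elim (fun p => w (Sum.inl p)) (fun p => -(-w (Sum.inr p))) = w := by
        ext (p | p) <;> simp
      simpa only [hw] using h2
  · intro h
    refine .of_dotProduct_mulVec_nonneg (isHermitian_add_symp hV) fun z => ?_
    rw [Complex.nonneg_iff, re_quadratic_form]
    exact ⟨h.dotProduct_mulVec_nonneg _,
      ((isHermitian_add_symp hV).im_star_dotProduct_mulVec_self z).symm⟩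

/-- A kernel vector `x` of `V` would give the kernel vector `(x, 0)` of `[[V, Ω], [Ωᵀ, V]]`, forcing
`Ωᵀ x = 0`. -/
lemma _root_.Uncertainty.posDef {V : Matrix (ι × Fin 2) (ι × Fin 2) ℝ} (hV : V.IsSymm)
    (h : Uncertainty V) : V.PosDef := by
  rw [uncertainty_iff hV] at h
  have hps : V.PosSemidef := h.submatrix Sum.inl
  refine .of_dotProduct_mulVec_pos hps.isHermitian fun x hx => ?_
  refine lt_of_le_of_ne (hps.dotProduct_mulVec_nonneg x) fun h0 => hx ?_
  have h1 := (h.dotProduct_mulVec_zero_iff (Sum.elim x 0)).mp (by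
    rw [Matrix.fromBlocks_mulVec]
    simpa [dotProduct, Fintype.sum_sum_type] using h0.symm)
  rw [Matrix.fromBlocks_mulVec] at h1
  have h2 : (J ι)ᵀ *ᵥ x = 0 := by
    ext p
    simpa using congrFun h1 (Sum.inr p)
  have h3 := congrArg (J ι *ᵥ ·) h2
  simpa [Matrix.mulVec_mulVec, symp_mul_transpose] using h3

lemma _root_.Uncertainty.conj_inv_le {V : Matrix (ι × Fin 2) (ι × Fin 2) ℝ} (hV : V.IsSymm)
    (h : Uncertainty V) : (V - J ι * V⁻¹ * (J ι)ᵀ).PosSemidef :=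
  (schur₂₂ (h.posDef hV)).mp ((uncertainty_iff hV).mp h)

lemma _root_.Uncertainty.submatrix {V : Matrix (ι × Fin 2) (ι × Fin 2) ℝ} (h : Uncertainty V)
    {f : κ → ι} (hf : Function.Injective f) :
    Uncertainty (V.submatrix (Prod.map f id) (Prod.map f id)) := by
  have := Matrix.PosSemidef.submatrix h (Prod.map f id)
  rw [Uncertainty, ← symp_submatrix hf]
  exact this

lemma posDef_symp_conj {X : Matrix (ι × Fin 2) (ι × Fin 2) ℝ} (hX : X.PosDef) :
    (J ι * X * (J ι)ᵀ).PosDef := by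
  have hu : IsUnit (J ι) := (Matrix.isUnit_iff_isUnit_det _).mpr det_symp_ne_zero.isUnit
  simpa [star_eq_conjTranspose] using (Matrix.IsUnit.posDef_star_right_conjugate_iff hu).mpr hX

lemma _root_.Uncertainty.one_le_det {V : Matrix (ι × Fin 2) (ι × Fin 2) ℝ} (hV : V.IsSymm)
    (h : Uncertainty V) : 1 ≤ V.det := by
  have hpd := h.posDef hV
  have h1 := det_le_det_of_le (posDef_symp_conj hpd.inv) (h.conj_inv_le hV)
  rw [det_symp_conj, Matrix.det_nonsing_inv, Ring.inverse_eq_inv'] at h1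
  have h2 := hpd.det_pos
  by_contra! h3
  exact absurd (h1.trans_lt h3) (not_lt.mpr (one_le_inv_iff₀.mpr ⟨h2, h3.le⟩))

/-- If `M` and `Ω M⁻¹ Ωᵀ` both lie below `γ`, then so does their geometric mean, which is a pure
covariance matrix. Its principal minors are controlled by those of `M` and `M⁻¹`. -/
lemma exists_pure_le {γ M : Matrix (ι × Fin 2) (ι × Fin 2) ℝ} (hM : M.PosDef)
    (h1 : (γ - M).PosSemidef) (h2 : (γ - J ι * M⁻¹ * (J ι)ᵀ).PosSemidef) :
    ∃ σ : Matrix (ι × Fin 2) (ι × Fin 2) ℝ,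
      σ.IsSymm ∧ Uncertainty σ ∧ σ.det = 1 ∧ (γ - σ).PosSemidef ∧
      ∀ S : Finset ι, (reduceCM S σ).det ^ 2 ≤ (reduceCM S M).det * (reduceCM S M⁻¹).det := by
  obtain ⟨G, hG, hGJ, hb⟩ := exists_geometric_mean hM symp_transpose symp_mul_transpose
  have hs : G.IsSymm := hG.isHermitian
  have hGu : IsUnit G.det := hG.det_pos.ne'.isUnit
  refine ⟨G, hs, ?_, ?_, le_of_blocks hb h1 h2, fun S => ?_⟩
  · rw [uncertainty_iff hs, schur₂₂ hG]
    have h3 : J ι * G⁻¹ = G * J ι := by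
      nth_rw 1 [← hGJ]
      rw [mul_assoc, Matrix.mul_nonsing_inv _ hGu, mul_one]
    rw [h3, mul_assoc, symp_mul_transpose, mul_one, sub_self]
    exact Matrix.PosSemidef.zero
  · have h3 := congrArg Matrix.det hGJ
    rw [Matrix.det_mul, Matrix.det_mul] at h3
    have h4 : G.det ^ 2 = 1 := mul_right_cancel₀ (det_symp_ne_zero (ι := ι)) (by linarith)
    exact (pow_eq_one_iff_of_nonneg hG.det_pos.le two_ne_zero).mp h4
  · have hf : Function.Injective (Prod.map ((↑) : S → ι) (id : Fin 2 → Fin 2)) :=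
      Subtype.val_injective.prodMap Function.injective_id
    have h3 := det_sq_le (hM.submatrix hf) (hG.submatrix hf) (blocks_submatrix hb _)
    rwa [symp_conj_submatrix, det_symp_conj] at h3

end Symplectic

/-! ### Upper bounds on the entanglement -/

section Entanglement

variable {ι κ : Type*} [Fintype ι] [DecidableEq ι] [Fintype κ] [DecidableEq κ]

lemma one_le_det_reduceCM (S : Finset ι) {σ : Matrix (ι × Fin 2) (ι × Fin 2) ℝ} (hs : σ.IsSymm)
    (hu : Uncertainty σ) : 1 ≤ (reduceCM S σ).det :=
  (hu.submatrix Subtype.val_injective).one_le_det (hs.submatrix _)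

/-- Each pure `σ ≤ γ` bounds the infimum; the uncertainty relation makes the set bounded below, which
`sInf` on `ℝ` needs in order not to take its junk value. -/
lemma E2_le (S : Finset ι) {γ σ : Matrix (ι × Fin 2) (ι × Fin 2) ℝ} (hs : σ.IsSymm)
    (hu : Uncertainty σ) (hd : σ.det = 1) (hle : (γ - σ).PosSemidef) :
    E2 S γ ≤ (1/2) * Real.log (reduceCM S σ).det := by
  refine csInf_le ⟨0, ?_⟩ ⟨σ, hs, hu, hd, hle, rfl⟩
  rintro x ⟨τ, hτs, hτu, -, -, rfl⟩
  have := Real.log_nonneg (one_le_det_reduceCM S hτs hτu)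
  positivity

/-- Every `M` such that `M` and `Ω M⁻¹ Ωᵀ` lie below `γ` bounds the entanglement from above. -/
lemma E2_le_of_le (S : Finset ι) {γ M : Matrix (ι × Fin 2) (ι × Fin 2) ℝ} (hM : M.PosDef)
    (h1 : (γ - M).PosSemidef)
    (h2 : (γ - symplecticForm ι * M⁻¹ * (symplecticForm ι)ᵀ).PosSemidef) :
    E2 S γ ≤ (1/4) * Real.log ((reduceCM S M).det * (reduceCM S M⁻¹).det) := by
  obtain ⟨σ, hs, hu, hd, hle, hdet⟩ := exists_pure_le hM h1 h2
  have h3 := one_le_det_reduceCM S hs hu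
  have h4 := Real.log_le_log (by positivity) (hdet S)
  rw [Real.log_pow] at h4
  have h5 := E2_le S hs hu hd hle
  push_cast at h4
  linarith

lemma det_submatrix_eq {f : κ → ι} (hf : Function.Injective f) {S : Finset ι}
    (hS : ∀ i, i ∈ S ↔ ∃ k, f k = i) (σ : Matrix (ι × Fin 2) (ι × Fin 2) ℝ) :
    (σ.submatrix (Prod.map f id) (Prod.map f id)).det = (reduceCM S σ).det := by
  let e : κ ≃ S := Equiv.ofBijective (fun k => ⟨f k, (hS _).mpr ⟨k, rfl⟩⟩)
    ⟨fun a b h => hf (congrArg Subtype.val h), fun ⟨i, hi⟩ => by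
      obtain ⟨k, hk⟩ := (hS i).mp hi
      exact ⟨k, Subtype.ext hk⟩⟩
  rw [← Matrix.det_submatrix_equiv_self (e.prodCongr (Equiv.refl (Fin 2))) (reduceCM S σ)]
  rfl

/-- The entanglement of the modes `a` and `j` is at most half of the conditional mutual information
of `a` and `j` given `S`, computed on any `σ ≤ γ` satisfying the uncertainty relation. The matrix
`M` to which `E2_le_of_le` applies is the Schur complement, over the modes in `S`, of the reduction
of `σ` to `{a, j} ∪ S`; its inverse is a principal submatrix of the inverse of that reduction. -/
lemma E2_le_conditional {a j : ι} {S : Finset ι} (haj : a ≠ j) (ha : a ∉ S) (hj : j ∉ S)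
    {γ σ : Matrix (ι × Fin 2) (ι × Fin 2) ℝ} (hs : σ.IsSymm) (hu : Uncertainty σ)
    (hle : (γ - σ).PosSemidef) :
    E2 (Finset.univ.filter (fun x : ↥({a, j} : Finset ι) => (x : ι) = a))
      (reduceCM ({a, j} : Finset ι) γ) ≤
    (1/4) * (Real.log (reduceCM (insert a S) σ).det + Real.log (reduceCM (insert j S) σ).det
      - Real.log (reduceCM S σ).det - Real.log (reduceCM (insert a (insert j S)) σ).det) := by
  set P : Finset ι := {a, j} with hP
  have haP : a ∈ P := by simp [hP]
  have hjP : j ∈ P := by simp [hP]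
  set A : Finset ↥P := Finset.univ.filter (fun x : ↥P => (x : ι) = a) with hA
  let F : ↥P ⊕ ↥S → ι := Sum.elim (↑) (↑)
  have hF : Function.Injective F := by
    rintro (⟨x, hx⟩ | ⟨x, hx⟩) (⟨y, hy⟩ | ⟨y, hy⟩) h <;>
      simp only [F, Sum.elim_inl, Sum.elim_inr] at h <;> subst h
    · rfl
    · rcases Finset.mem_insert.mp hx with h | h
      · exact absurd (h ▸ hy) ha
      · exact absurd (Finset.mem_singleton.mp h ▸ hy) hj
    · rcases Finset.mem_insert.mp hy with h | h
      · exact absurd (h ▸ hx) ha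
      · exact absurd (Finset.mem_singleton.mp h ▸ hx) hj
    · rfl
  set V := σ.submatrix (Prod.map F (id : Fin 2 → Fin 2)) (Prod.map F id) with hV
  have hVs : V.IsSymm := hs.submatrix _
  have hVu : Uncertainty V := hu.submatrix hF
  have hVpd : V.PosDef := hVu.posDef hVs
  let q : ↥P × Fin 2 → (↥P ⊕ ↥S) × Fin 2 := Prod.map Sum.inl id
  have hq : Function.Injective q := Sum.inl_injective.prodMap Function.injective_id
  set N := V⁻¹.submatrix q q with hN
  have hNpd : N.PosDef := hVpd.inv.submatrix hq
  have hNN : N⁻¹⁻¹ = N := Matrix.nonsing_inv_nonsing_inv _ hNpd.det_pos.ne'.isUnit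
  have hred : (reduceCM P γ - V.submatrix q q).PosSemidef :=
    hle.submatrix (Prod.map ((↑) : ↥P → ι) (id : Fin 2 → Fin 2))
  have key := E2_le_of_le A (γ := reduceCM P γ) hNpd.inv
    (by simpa using hred.add (inv_submatrix_inv_le hVpd hq))
    (by
      have h := (hVu.conj_inv_le hVs).submatrix q
      have h' := symp_conj_submatrix V⁻¹ (Sum.inl : ↥P → ↥P ⊕ ↥S)
      have h'' := hred.add h
      rw [Matrix.submatrix_sub] at h''
      change (_ + (V.submatrix q q - (_ * V⁻¹ * _ᵀ).submatrix (Prod.map Sum.inl id)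
        (Prod.map Sum.inl id))).PosSemidef at h''
      rw [h'] at h''
      rw [hNN]
      simpa using h'')
  rw [hNN] at key
  -- The principal minors involved are evaluated by Jacobi's identity.
  let α : ↥A → ↥P := (↑)
  let β : Unit → ↥P := fun _ => ⟨j, hjP⟩
  have hαβ : Function.Bijective (Sum.elim α β) := by
    constructor
    · rintro (⟨x, hx⟩ | x) (⟨y, hy⟩ | y) h
      · simpa [α] using h
      · have := (Finset.mem_filter.mp hx).2
        simp only [Sum.elim_inl, Sum.elim_inr, α, β] at h
        rw [h] at this
        exact absurd this.symm haj
      · have := (Finset.mem_filter.mp hy).2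
        simp only [Sum.elim_inl, Sum.elim_inr, α, β] at h
        rw [← h] at this
        exact absurd this.symm haj
      · rfl
    · rintro ⟨x, hx⟩
      rcases Finset.mem_insert.mp hx with h | h
      · exact ⟨Sum.inl ⟨⟨x, hx⟩, by simp [hA, h]⟩, rfl⟩
      · exact ⟨Sum.inr (), Subtype.ext (Finset.mem_singleton.mp h).symm⟩
  have hVdet : V.det = (reduceCM (insert a (insert j S)) σ).det := by
    refine det_submatrix_eq hF (fun i => ?_) σ
    simp [F, hP, or_assoc]
  have hNdet : N.det = (reduceCM S σ).det / V.det := by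
    rw [hN, det_inv_submatrix V hVpd.det_pos.ne' q (Prod.map Sum.inr id)
      (bijective_prodMap (f := Sum.inl) (g := Sum.inr) (by
        rw [Sum.elim_inl_inr]; exact Function.bijective_id))]
    rfl
  have hNα : (reduceCM A N).det = (reduceCM (insert j S) σ).det / V.det := by
    have := det_inv_submatrix V hVpd.det_pos.ne' _ _
      (bijective_prodMap (bijective_assoc S hαβ))
    refine this.trans (congrArg (· / V.det) ?_)
    refine det_submatrix_eq (f := F ∘ Sum.map β id) ?_ (fun i => ?_) σ
    · exact hF.comp ((Function.injective_of_subsingleton β).sumMap Function.injective_id)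
    · simp [F, β, eq_comm]
  have hMα : (reduceCM A N⁻¹).det = ((reduceCM (insert a S) σ).det / V.det) / N.det := by
    have := det_inv_submatrix N hNpd.det_pos.ne' _ _ (bijective_prodMap hαβ)
    refine this.trans (congrArg (· / N.det) ?_)
    have := det_inv_submatrix V hVpd.det_pos.ne' _ _
      (bijective_prodMap (bijective_assoc S
        (f := β) (g := α) (by
          rw [← Sum.elim_swap]; exact hαβ.comp (Equiv.sumComm _ _).bijective)))
    refine this.trans (congrArg (· / V.det) ?_)
    refine det_submatrix_eq (f := F ∘ Sum.map α id) ?_ (fun i => ?_) σ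
    · exact hF.comp (Subtype.val_injective.sumMap Function.injective_id)
    · simp [F, α, hA, hP, eq_comm]
  have pos : ∀ T : Finset ι, 0 < (reduceCM T σ).det := fun T =>
    one_pos.trans_le (one_le_det_reduceCM T hs hu)
  have e : (reduceCM A N⁻¹).det * (reduceCM A N).det =
      (reduceCM (insert a S) σ).det * (reduceCM (insert j S) σ).det /
        ((reduceCM S σ).det * (reduceCM (insert a (insert j S)) σ).det) := by
    have h1 := (pos S).ne'
    have h2 := (pos (insert a (insert j S))).ne'
    rw [hMα, hNα, hNdet, hVdet]
    field_simp
  rw [e, Real.log_div (mul_pos (pos _) (pos _)).ne' (mul_pos (pos _) (pos _)).ne',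
    Real.log_mul (pos _).ne' (pos _).ne', Real.log_mul (pos _).ne' (pos _).ne'] at key
  linarith

/-- Summing the conditional bounds over the modes of `S`, the chain rule telescopes. -/
lemma sum_E2_le {a : ι} {γ σ : Matrix (ι × Fin 2) (ι × Fin 2) ℝ} (hs : σ.IsSymm)
    (hu : Uncertainty σ) (hle : (γ - σ).PosSemidef) (S : Finset ι) (ha : a ∉ S) :
    ∑ j ∈ S, E2 (Finset.univ.filter (fun x : ↥({a, j} : Finset ι) => (x : ι) = a))
      (reduceCM ({a, j} : Finset ι) γ) ≤
    (1/4) * (Real.log (reduceCM {a} σ).det + Real.log (reduceCM S σ).det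
      - Real.log (reduceCM (insert a S) σ).det) := by
  induction S using Finset.induction_on with
  | empty =>
    have h : (reduceCM (∅ : Finset ι) σ).det = 1 := Matrix.det_isEmpty
    rw [h, insert_empty_eq a]
    simp
  | insert j S hj ih =>
    simp only [Finset.mem_insert, not_or] at ha
    rw [Finset.sum_insert hj]
    have h1 := ih ha.2
    have h2 := E2_le_conditional ha.1 ha.2 hj hs hu hle
    linarith

end Entanglement

end Renyi2

/-- **Monogamy of the Gaussian Rényi-2 entanglement.**  For an `n`-mode
covariance matrix `γ` (real symmetric with `γ + iΩ ⪰ 0`), with the modes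
labelled by `Fin n` and mode `0` chosen as the focus,
`E₂(γ_{A₁ : A₂…A_n}) − Σ_{j≠0} E₂(γ_{A₁ : A_j}) ≥ 0`, where each bipartite
term `E₂(γ_{A₁ : A_j})` is computed on the reduced two-mode covariance matrix
of the modes `{0, j}`. -/
theorem renyi2_entanglement_monogamy (n : ℕ) [NeZero n]
    (γ : Matrix (Fin n × Fin 2) (Fin n × Fin 2) ℝ)
    (hsym : γ.IsSymm) (hunc : Uncertainty γ) :
    0 ≤ E2 {0} γ -
      ∑ j ∈ Finset.univ.erase (0 : Fin n),
        E2 (Finset.univ.filter (fun x : ↥({0, j} : Finset (Fin n)) => (x : Fin n) = 0))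
          (reduceCM ({0, j} : Finset (Fin n)) γ) := by
  open Renyi2 in
  rw [sub_nonneg]
  obtain ⟨σ₀, hs₀, hu₀, hd₀, hle₀, -⟩ := exists_pure_le (hunc.posDef hsym)
    (by rw [sub_self]; exact Matrix.PosSemidef.zero) (hunc.conj_inv_le hsym)
  refine le_csInf ⟨_, σ₀, hs₀, hu₀, hd₀, hle₀, rfl⟩ ?_
  rintro x ⟨σ, hs, hu, hd, hle, rfl⟩
  have hpd := hu.posDef hs
  have h1 := sum_E2_le hs hu hle (Finset.univ.erase 0) (Finset.notMem_erase _ _)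
  have hinj : Function.Injective
      (Prod.map ((↑) : ↥({0} : Finset (Fin n)) → Fin n) (id : Fin 2 → Fin 2)) :=
    Subtype.val_injective.prodMap Function.injective_id
  -- Compare the `{0}` blocks in `Ω σ⁻¹ Ωᵀ ≤ σ`.
  have h2 : (reduceCM {0} σ⁻¹).det ≤ (reduceCM {0} σ).det := by
    have h := (hu.conj_inv_le hs).submatrix
      (Prod.map ((↑) : ↥({0} : Finset (Fin n)) → Fin n) (id : Fin 2 → Fin 2))
    rw [Matrix.submatrix_sub] at h
    change (_ - (_ * σ⁻¹ * _ᵀ).submatrix (Prod.map _ id) (Prod.map _ id)).PosSemidef at h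
    rw [symp_conj_submatrix] at h
    have h' := det_le_det_of_le (posDef_symp_conj (hpd.inv.submatrix hinj)) h
    rwa [det_symp_conj] at h'
  have h3 : (reduceCM {0} σ⁻¹).det = (reduceCM (Finset.univ.erase 0) σ).det := by
    have h := det_inv_submatrix σ hpd.det_pos.ne' _ _ (bijective_prodMap
      (f := ((↑) : ↥({0} : Finset (Fin n)) → Fin n))
      (g := ((↑) : ↥(Finset.univ.erase (0 : Fin n)) → Fin n)) ?_)
    · rw [hd, div_one] at h
      exact h
    · constructor
      · rintro (⟨x, hx⟩ | ⟨x, hx⟩) (⟨y, hy⟩ | ⟨y, hy⟩) h <;>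
          simp only [Sum.elim_inl, Sum.elim_inr] at h <;> subst h
        · rfl
        · exact absurd (Finset.mem_singleton.mp hx) (Finset.ne_of_mem_erase hy)
        · exact absurd (Finset.mem_singleton.mp hy) (Finset.ne_of_mem_erase hx)
        · rfl
      · intro x
        by_cases hx : x = 0
        · exact ⟨Sum.inl ⟨x, by simp [hx]⟩, rfl⟩
        · exact ⟨Sum.inr ⟨x, by simp [hx]⟩, rfl⟩
  have h4 : (reduceCM (insert 0 (Finset.univ.erase (0 : Fin n))) σ).det = 1 := by
    rw [← det_submatrix_eq (f := (id : Fin n → Fin n)) Function.injective_id (by simp) σ]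
    simpa using hd
  have h5 := Real.log_le_log
    (one_pos.trans_le (one_le_det_reduceCM (Finset.univ.erase (0 : Fin n)) hs hu)) (h3 ▸ h2)
  rw [h4, Real.log_one] at h1
  linarith
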